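/- For every α ∈ (1.387, 1.95), the function ĥ_α(x,y) = h_α( h_α^{-1}(x) ∗ h_α^{-1}(y) ) is neither convex nor concave in its first argument uniformly over fixed second arguments: it is not the case that for every fixed y ∈ [0, log 2] the map x ↦ ĥ_α(x,y) is convex on [0, log 2], and it is not the case that for every fixed y ∈ [0, log 2] the map x ↦ ĥ_α(x,y) is concave on [0, log 2]. -/

import Mathlib

open Real

noncomputable section

/-- Binary convolution `a∗b = a(1-b) + (1-a)b`. -/
def bconv (a b : ℝ) : ℝ := a * (1 - b) + (1 - a) * b

/-- Binary Rényi entropy `h_α(p) = (1/(1-α))·log(p^α + (1-p)^α)`. -/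
def binH (α p : ℝ) : ℝ := (1 / (1 - α)) * Real.log (p ^ α + (1 - p) ^ α)

/-- Inverse of `h_α` as a map `[0, log 2] → [0, 1/2]`. -/
def binHInv (α : ℝ) : ℝ → ℝ := Function.invFunOn (binH α) (Set.Icc 0 (1/2))

/-- `k_α^A(p) = (p^α + (1-p)^α)^{1/α}`. -/
def kA (α p : ℝ) : ℝ := (p ^ α + (1 - p) ^ α) ^ (1/α)

/-- Inverse of `k_α^A`, mapping `I_α^A` back to `[0,1/2]`. -/
def kAInv (α : ℝ) : ℝ → ℝ := Function.invFunOn (kA α) (Set.Icc 0 (1/2))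

/-- `δ_α^A = 2^{(1-α)/α}`. -/
def deltaA (α : ℝ) : ℝ := (2 : ℝ) ^ ((1 - α)/α)

/-- The closed interval `I_α^A` with endpoints `1` and `δ_α^A`. -/
def IA (α : ℝ) : Set ℝ := Set.uIcc 1 (deltaA α)

/-- `κ_α^A(x,y) = k_α^A((k_α^A)⁻¹(x) ∗ (k_α^A)⁻¹(y))`. -/
def kkA (α x y : ℝ) : ℝ := kA α (bconv (kAInv α x) (kAInv α y))

/-- `k_α^H(p) = p^α + (1-p)^α`. -/
def kH (α p : ℝ) : ℝ := p ^ α + (1 - p) ^ α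

/-- Inverse of `k_α^H`, mapping `I_α^H` back to `[0,1/2]`. -/
def kHInv (α : ℝ) : ℝ → ℝ := Function.invFunOn (kH α) (Set.Icc 0 (1/2))

/-- `δ_α^H = 2^{1-α}`. -/
def deltaH (α : ℝ) : ℝ := (2 : ℝ) ^ (1 - α)

/-- The closed interval `I_α^H` with endpoints `1` and `δ_α^H`. -/
def IH (α : ℝ) : Set ℝ := Set.uIcc 1 (deltaH α)

/-- `κ_α^H(x,y) = k_α^H((k_α^H)⁻¹(x) ∗ (k_α^H)⁻¹(y))`. -/
def kkH (α x y : ℝ) : ℝ := kH α (bconv (kHInv α x) (kHInv α y))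

/-- `ĥ_α(x,y) = h_α(h_α⁻¹(x) ∗ h_α⁻¹(y))`. -/
def hhat (α x y : ℝ) : ℝ := binH α (bconv (binHInv α x) (binHInv α y))

/-- Marginal on `Y` of a joint pmf. -/
def margY {X Y : Type*} [Fintype X] (p : X → Y → ℝ) (y : Y) : ℝ := ∑ x, p x y

/-- A joint pmf: nonnegative entries summing to one. -/
def IsPmf {X Y : Type*} [Fintype X] [Fintype Y] (p : X → Y → ℝ) : Prop :=
  (∀ x y, 0 ≤ p x y) ∧ ∑ x, ∑ y, p x y = 1

/-- Arimoto conditional Rényi entropy `H_α^A(X|Y)`. -/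
def condA (α : ℝ) {X Y : Type*} [Fintype X] [Fintype Y] (p : X → Y → ℝ) : ℝ :=
  (α / (1 - α)) * Real.log (∑ y, margY p y * (∑ x, (p x y / margY p y) ^ α) ^ (1/α))

/-- Hayashi conditional Rényi entropy `H_α^H(X|Y)`. -/
def condH (α : ℝ) {X Y : Type*} [Fintype X] [Fintype Y] (p : X → Y → ℝ) : ℝ :=
  (1 / (1 - α)) * Real.log (∑ y, ∑ x, margY p y * (p x y / margY p y) ^ α)

/-- Jizba–Arimitsu conditional Rényi entropy `H_α^J(X|Y)`. -/
def condJ (α : ℝ) {X Y : Type*} [Fintype X] [Fintype Y] (p : X → Y → ℝ) : ℝ :=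
  (1 / (1 - α)) * (Real.log (∑ x, ∑ y, p x y ^ α) - Real.log (∑ y, margY p y ^ α))

/-- Cachin conditional Rényi entropy `H_α^C(X|Y)`. -/
def condC (α : ℝ) {X Y : Type*} [Fintype X] [Fintype Y] (p : X → Y → ℝ) : ℝ :=
  (1 / (1 - α)) * ∑ y, margY p y * Real.log (∑ x, (p x y / margY p y) ^ α)

/-- `K_α^A(X|Y) = exp(((1-α)/α)·H_α^A(X|Y))`. -/
def KA (α : ℝ) {X Y : Type*} [Fintype X] [Fintype Y] (p : X → Y → ℝ) : ℝ :=
  Real.exp (((1 - α)/α) * condA α p)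

/-- `K_α^H(X|Y) = exp((1-α)·H_α^H(X|Y))`. -/
def KH (α : ℝ) {X Y : Type*} [Fintype X] [Fintype Y] (p : X → Y → ℝ) : ℝ :=
  Real.exp ((1 - α) * condH α p)

/-- `K_α^J(X|Y) = exp((1-α)·H_α^J(X|Y))`. -/
def KJ (α : ℝ) {X Y : Type*} [Fintype X] [Fintype Y] (p : X → Y → ℝ) : ℝ :=
  Real.exp ((1 - α) * condJ α p)

/-- Joint pmf of `(X₁+X₂, (Y₁,Y₂))` for independent pairs `(X₁,Y₁)`, `(X₂,Y₂)`. -/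
def combine {Y1 Y2 : Type*} (p1 : Bool → Y1 → ℝ) (p2 : Bool → Y2 → ℝ) :
    Bool → Y1 × Y2 → ℝ :=
  fun z y => ∑ x : Bool, p1 x y.1 * p2 (Bool.xor x z) y.2

/-- `k_∞^A(p) = max{p, 1-p}`. -/
def kInf (p : ℝ) : ℝ := max p (1 - p)

/-- Binary min-entropy `h_∞(p) = -log max{p, 1-p}`. -/
def binHInf (p : ℝ) : ℝ := - Real.log (max p (1 - p))

/-- Inverse of the restriction of `h_∞` to `[0,1/2]`. -/
def binHInfInv : ℝ → ℝ := Function.invFunOn binHInf (Set.Icc 0 (1/2))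

/-- Conditional min-entropy `H_∞(X|Y)` for binary `X`. -/
def condInf {Y : Type*} [Fintype Y] (p : Bool → Y → ℝ) : ℝ :=
  - Real.log (∑ y, margY p y * max (p false y / margY p y) (p true y / margY p y))

/-- Unconditional Rényi entropy of a finitely supported distribution. -/
def renyiEnt (α : ℝ) {X : Type*} [Fintype X] (p : X → ℝ) : ℝ :=
  (1 / (1 - α)) * Real.log (∑ x, p x ^ α)

/-- Distribution of the mod-2 sum of two independent binary random variables. -/
def sumDist (p1 p2 : Bool → ℝ) : Bool → ℝ := fun z => ∑ x : Bool, p1 x * p2 (Bool.xor x z)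

/-!
Write `x = h_α(p)`. As `y` tends to `log 2`, the second-order expansion of `h_α` at `1/2` gives
`ĥ_α(x, y) ≈ log 2 - c_y (1 - 4p(1-p))` with `c_y > 0`, so convexity (concavity) of all the maps
`ĥ_α(·, y)` passes to the map `x ↦ p(1-p)` on `[0, log 2]`.

* If that map is convex, it lies below its chord, i.e. `4 log 2 · p(1-p) ≤ h_α(p)`. Both sides
  agree at `p = 1/2`, and comparing second derivatives there gives `α ≤ 2 log 2 ≈ 1.3863`.
* If it is concave, it lies below its tangent at `0`, i.e. `α/(α-1) · p(1-p) ≤ h_α(p)`. For `α > 1`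
  and small `p` this forces `p^α = O(p²)`, which is false for `α < 2`.
-/

open Filter Set Topology

section Limits

theorem convexOn_of_tendsto {𝕜 E β ι : Type*} [Semiring 𝕜] [PartialOrder 𝕜] [AddCommMonoid E]
    [SMul 𝕜 E] [AddCommMonoid β] [PartialOrder β] [SMul 𝕜 β] [TopologicalSpace β]
    [OrderClosedTopology β] [ContinuousAdd β] [ContinuousConstSMul 𝕜 β] {s : Set E}
    {f : ι → E → β} {g : E → β} {l : Filter ι} [l.NeBot]
    (hf : ∀ᶠ i in l, ConvexOn 𝕜 s (f i)) (hfg : ∀ x ∈ s, Tendsto (f · x) l (𝓝 (g x))) :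
    ConvexOn 𝕜 s g := by
  have hs : Convex 𝕜 s := hf.exists.choose_spec.1
  refine ⟨hs, fun x hx y hy a b ha hb hab => ?_⟩
  refine le_of_tendsto_of_tendsto (hfg _ (hs hx hy ha hb hab))
    (((hfg x hx).const_smul a).add ((hfg y hy).const_smul b)) ?_
  filter_upwards [hf] with i hi using hi.2 hx hy ha hb hab

theorem concaveOn_of_tendsto {𝕜 E β ι : Type*} [Semiring 𝕜] [PartialOrder 𝕜] [AddCommMonoid E]
    [SMul 𝕜 E] [AddCommMonoid β] [PartialOrder β] [SMul 𝕜 β] [TopologicalSpace β]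
    [OrderClosedTopology β] [ContinuousAdd β] [ContinuousConstSMul 𝕜 β] {s : Set E}
    {f : ι → E → β} {g : E → β} {l : Filter ι} [l.NeBot]
    (hf : ∀ᶠ i in l, ConcaveOn 𝕜 s (f i)) (hfg : ∀ x ∈ s, Tendsto (f · x) l (𝓝 (g x))) :
    ConcaveOn 𝕜 s g :=
  convexOn_of_tendsto (β := βᵒᵈ) hf hfg

theorem tendsto_sub_div_sub_sq_nhdsNE {f f' : ℝ → ℝ} {a c : ℝ}
    (hf : ∀ᶠ x in 𝓝 a, HasDerivAt f (f' x) x) (hf'a : f' a = 0) (hf' : HasDerivAt f' c a) :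
    Tendsto (fun x => (f x - f a) / (x - a) ^ 2) (𝓝[≠] a) (𝓝 (c / 2)) := by
  refine HasDerivAt.lhopital_zero_nhdsNE (f' := f') (g' := fun x => 2 * (x - a))
    ((hf.filter_mono nhdsWithin_le_nhds).mono fun x hx => hx.sub_const (f a))
    (.of_forall fun x => by simpa using ((hasDerivAt_id' x).sub_const a).fun_pow 2) ?_ ?_ ?_ ?_
  · filter_upwards [self_mem_nhdsWithin] with x hx
    exact mul_ne_zero two_ne_zero (sub_ne_zero.2 hx)
  · have hcont : ContinuousAt (fun x => f x - f a) a := hf.self_of_nhds.continuousAt.sub_const _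
    simpa using hcont.tendsto.mono_left nhdsWithin_le_nhds
  · have hcont : ContinuousAt (fun x => (x - a) ^ 2) a := by fun_prop
    simpa using hcont.tendsto.mono_left nhdsWithin_le_nhds
  · refine (hf'.tendsto_slope.div_const 2).congr fun x => ?_
    rw [slope_def_field, hf'a, sub_zero, div_div, mul_comm]

end Limits

section BinaryEntropy

variable {α p : ℝ}

theorem kH_pos (α : ℝ) (hp : p ∈ Icc 0 1) : 0 < kH α p := by
  rcases hp.1.eq_or_lt with rfl | hp0
  · exact add_pos_of_nonneg_of_pos (zero_rpow_nonneg α) (by simp)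
  · exact add_pos_of_pos_of_nonneg (rpow_pos_of_pos hp0 α) (rpow_nonneg (sub_nonneg.2 hp.2) α)

theorem hasDerivAt_kH (h0 : p ≠ 0 ∨ 1 ≤ α) (h1 : 1 - p ≠ 0 ∨ 1 ≤ α) :
    HasDerivAt (kH α) (α * (p ^ (α - 1) - (1 - p) ^ (α - 1))) p := by
  have hleft := (hasDerivAt_id p).rpow_const (p := α) h0
  have hright := ((hasDerivAt_id p).const_sub 1).rpow_const (p := α) h1
  exact (hleft.add hright).congr_deriv (by simp only [id]; ring)

theorem binH_zero (hα : α ≠ 0) : binH α 0 = 0 := by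
  simp [binH, zero_rpow hα]

theorem binH_half (hα : α ≠ 1) : binH α (1 / 2) = log 2 := by
  have hα' : 1 - α ≠ 0 := sub_ne_zero.2 hα.symm
  have hsum : (1 / 2 : ℝ) ^ α + (1 - 1 / 2) ^ α = 2 ^ (1 - α) := by
    rw [sub_half, rpow_sub two_pos, rpow_one, div_rpow one_pos.le two_pos.le, one_rpow]
    ring
  rw [binH, hsum, log_rpow two_pos, ← mul_assoc, one_div_mul_cancel hα', one_mul]

theorem hasDerivAt_binH (hp : p ∈ Icc 0 1) (h0 : p ≠ 0 ∨ 1 ≤ α) (h1 : 1 - p ≠ 0 ∨ 1 ≤ α) :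
    HasDerivAt (binH α) (α / (1 - α) * (p ^ (α - 1) - (1 - p) ^ (α - 1)) / kH α p) p :=
  (((hasDerivAt_kH h0 h1).log (kH_pos α hp).ne').const_mul (1 / (1 - α))).congr_deriv (by ring)

theorem hasDerivAt_binH_of_mem_Ioo (α : ℝ) (hp : p ∈ Ioo 0 1) :
    HasDerivAt (binH α) (α / (1 - α) * (p ^ (α - 1) - (1 - p) ^ (α - 1)) / kH α p) p :=
  hasDerivAt_binH ⟨hp.1.le, hp.2.le⟩ (.inl hp.1.ne') (.inl (sub_pos.2 hp.2).ne')

theorem continuousOn_binH (hα : 0 ≤ α) : ContinuousOn (binH α) (Icc 0 1) := by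
  have hkH : Continuous (kH α) :=
    (continuous_rpow_const hα).add ((continuous_rpow_const hα).comp (continuous_sub_left 1))
  exact (hkH.continuousOn.log fun p hp => (kH_pos α hp).ne').const_mul _

theorem strictMonoOn_binH (hα : 0 < α) (hα1 : α ≠ 1) :
    StrictMonoOn (binH α) (Icc 0 (1 / 2)) := by
  refine strictMonoOn_of_deriv_pos (convex_Icc _ _)
    ((continuousOn_binH hα.le).mono (Icc_subset_Icc_right (by norm_num))) fun p hp => ?_
  rw [interior_Icc] at hp
  have hp1 : p ∈ Ioo 0 1 := ⟨hp.1, by linarith [hp.2]⟩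
  have hlt : p < 1 - p := by linarith [hp.2]
  rw [(hasDerivAt_binH_of_mem_Ioo α hp1).deriv]
  refine div_pos ?_ (kH_pos α ⟨hp1.1.le, hp1.2.le⟩)
  rcases hα1.lt_or_gt with hα1 | hα1
  · exact mul_pos (div_pos hα (by linarith))
      (sub_pos.2 (rpow_lt_rpow_of_neg hp.1 hlt (by linarith)))
  · exact mul_pos_of_neg_of_neg (div_neg_of_pos_of_neg hα (by linarith))
      (sub_neg.2 (rpow_lt_rpow hp.1.le hlt (by linarith)))

theorem bijOn_binH (hα : 0 < α) (hα1 : α ≠ 1) :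
    BijOn (binH α) (Icc 0 (1 / 2)) (Icc 0 (log 2)) := by
  have hmono := strictMonoOn_binH hα hα1
  have hcont : ContinuousOn (binH α) (Icc 0 (1 / 2)) :=
    (continuousOn_binH hα.le).mono (Icc_subset_Icc_right (by norm_num))
  have himage := hcont.image_Icc_of_monotoneOn (by norm_num) hmono.monotoneOn
  rw [binH_zero hα.ne', binH_half hα1] at himage
  exact himage ▸ hmono.injOn.bijOn_image

theorem binHInv_binH (hα : 0 < α) (hα1 : α ≠ 1) (hp : p ∈ Icc 0 (1 / 2)) :
    binHInv α (binH α p) = p :=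
  (bijOn_binH hα hα1).injOn.leftInvOn_invFunOn hp

theorem hasDerivAt_deriv_binH_half (hα1 : α ≠ 1) :
    HasDerivAt (fun p => α / (1 - α) * (p ^ (α - 1) - (1 - p) ^ (α - 1)) / kH α p) (-4 * α)
      (1 / 2) := by
  have hα' : 1 - α ≠ 0 := sub_ne_zero.2 hα1.symm
  have hhalf : (1 / 2 : ℝ) ≠ 0 := by norm_num
  have hhalf' : 1 - (1 / 2 : ℝ) ≠ 0 := by norm_num
  have hleft := (hasDerivAt_id (1 / 2 : ℝ)).rpow_const (p := α - 1) (.inl hhalf)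
  have hright := ((hasDerivAt_id (1 / 2 : ℝ)).const_sub 1).rpow_const (p := α - 1) (.inl hhalf')
  have hkH := hasDerivAt_kH (α := α) (.inl hhalf) (.inl hhalf')
  refine (((hleft.sub hright).const_mul _).div hkH (kH_pos α (by norm_num)).ne').congr_deriv ?_
  have hpow : (1 / 2 : ℝ) ^ α ≠ 0 := (rpow_pos_of_pos one_half_pos α).ne'
  simp only [Pi.sub_apply, id, kH, show (1 : ℝ) - 1 / 2 = 1 / 2 by norm_num, rpow_sub_one hhalf]
  field_simp
  ring

theorem tendsto_binH_sub_log_two_div_sq (hα1 : α ≠ 1) :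
    Tendsto (fun p => (binH α p - log 2) / (p - 1 / 2) ^ 2) (𝓝[≠] (1 / 2)) (𝓝 (-2 * α)) := by
  have hderiv : ∀ᶠ p in 𝓝 (1 / 2 : ℝ), HasDerivAt (binH α)
      (α / (1 - α) * (p ^ (α - 1) - (1 - p) ^ (α - 1)) / kH α p) p := by
    filter_upwards [Ioo_mem_nhds one_half_pos one_half_lt_one] with p hp
    exact hasDerivAt_binH_of_mem_Ioo α hp
  have hcritical :
      α / (1 - α) * ((1 / 2) ^ (α - 1) - (1 - 1 / 2) ^ (α - 1)) / kH α (1 / 2) = 0 := by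
    rw [show (1 : ℝ) - 1 / 2 = 1 / 2 by norm_num, sub_self, mul_zero, zero_div]
  have htaylor := tendsto_sub_div_sub_sq_nhdsNE hderiv hcritical (hasDerivAt_deriv_binH_half hα1)
  rw [binH_half hα1] at htaylor
  convert htaylor using 2
  ring

theorem tendsto_binH_div_nhdsGT_zero (hα : 1 < α) :
    Tendsto (fun p => binH α p / p) (𝓝[>] 0) (𝓝 (α / (α - 1))) := by
  have hα0 : α ≠ 0 := by linarith
  have hslope := (hasDerivAt_binH (by simp) (.inr hα.le) (.inr hα.le)).tendsto_slope.mono_left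
    (nhdsGT_le_nhdsNE (0 : ℝ))
  have hvalue : α / (1 - α) * ((0 : ℝ) ^ (α - 1) - (1 - 0) ^ (α - 1)) / kH α 0 = α / (α - 1) := by
    simp [kH, zero_rpow hα0, zero_rpow (sub_pos.2 hα).ne', ← div_neg]
  rw [hvalue] at hslope
  simpa [slope_fun_def_field, binH_zero hα0] using hslope

theorem one_sub_mul_add_rpow_le_kH (hα : 1 ≤ α) (hp : p ≤ 1) : 1 - α * p + p ^ α ≤ kH α p := by
  have hbernoulli := one_add_mul_self_le_rpow_one_add (s := -p) (by linarith) hα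
  rw [kH, sub_eq_add_neg 1 p]
  linarith

end BinaryEntropy

section Convolution

variable {α p : ℝ}

theorem bconv_sub_half (p q : ℝ) : bconv p q - 1 / 2 = -2 * (p - 1 / 2) * (q - 1 / 2) := by
  unfold bconv
  ring

theorem tendsto_binH_bconv_sub_log_two_div_sq (hα1 : α ≠ 1) (p : ℝ) :
    Tendsto (fun q => (binH α (bconv p q) - log 2) / (q - 1 / 2) ^ 2) (𝓝[≠] (1 / 2))
      (𝓝 (-2 * α * (1 - 2 * p) ^ 2)) := by
  rcases eq_or_ne p (1 / 2) with rfl | hp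
  · have hconst (q : ℝ) : bconv (1 / 2) q = 1 / 2 := by unfold bconv; ring
    simp only [hconst, binH_half hα1, sub_self, zero_div]
    convert tendsto_const_nhds using 2
    ring
  have hp' : p - 1 / 2 ≠ 0 := sub_ne_zero.2 hp
  have hcont : Tendsto (bconv p) (𝓝 (1 / 2)) (𝓝 (1 / 2)) := by
    have : Continuous (bconv p) := by unfold bconv; fun_prop
    convert this.tendsto (1 / 2) using 2
    unfold bconv
    ring
  have hbconv : Tendsto (bconv p) (𝓝[≠] (1 / 2)) (𝓝[≠] (1 / 2)) := by
    refine tendsto_nhdsWithin_iff.2 ⟨hcont.mono_left nhdsWithin_le_nhds, ?_⟩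
    filter_upwards [self_mem_nhdsWithin] with q hq
    rw [mem_compl_singleton_iff, ← sub_ne_zero, bconv_sub_half]
    exact mul_ne_zero (mul_ne_zero (by norm_num) hp') (sub_ne_zero.2 hq)
  refine (((tendsto_binH_sub_log_two_div_sq hα1).comp hbconv).mul_const ((1 - 2 * p) ^ 2)).congr' ?_
  filter_upwards [self_mem_nhdsWithin] with q hq
  have hq' : q - 1 / 2 ≠ 0 := sub_ne_zero.2 hq
  rw [Function.comp_apply, bconv_sub_half, show 1 - 2 * p = -2 * (p - 1 / 2) by ring]
  generalize p - 1 / 2 = a, q - 1 / 2 = b at hp' hq'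
  field_simp

/-- The variance `p(1-p)` of the Bernoulli law whose parameter `p ∈ [0, 1/2]` has Rényi entropy `x`.
Up to an affine change it is the limit profile of `ĥ_α(x, y)` as `y → log 2`. -/
def varOfEntropy (α x : ℝ) : ℝ := binHInv α x * (1 - binHInv α x)

theorem varOfEntropy_binH (hα : 0 < α) (hα1 : α ≠ 1) (hp : p ∈ Icc 0 (1 / 2)) :
    varOfEntropy α (binH α p) = p * (1 - p) := by
  rw [varOfEntropy, binHInv_binH hα hα1 hp]

theorem varOfEntropy_zero (hα : 0 < α) (hα1 : α ≠ 1) : varOfEntropy α 0 = 0 := by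
  simpa [binH_zero hα.ne'] using varOfEntropy_binH hα hα1 (p := 0) (by norm_num)

theorem varOfEntropy_log_two (hα : 0 < α) (hα1 : α ≠ 1) : varOfEntropy α (log 2) = 1 / 4 := by
  rw [← binH_half hα1, varOfEntropy_binH hα hα1 (by norm_num)]
  norm_num

theorem tendsto_hhat_varOfEntropy (hα : 0 < α) (hα1 : α ≠ 1) (x : ℝ) :
    Tendsto (fun q => (8 * α * (q - 1 / 2) ^ 2)⁻¹ • (hhat α x (binH α q) + -log 2) + 1 / 4)
      (𝓝[<] (1 / 2)) (𝓝 (varOfEntropy α x)) := by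
  have hlim := (((tendsto_binH_bconv_sub_log_two_div_sq hα1 (binHInv α x)).mono_left
    (nhdsLT_le_nhdsNE _)).const_mul (8 * α)⁻¹).add_const (1 / 4)
  have hvalue : (8 * α)⁻¹ * (-2 * α * (1 - 2 * binHInv α x) ^ 2) + 1 / 4 = varOfEntropy α x := by
    rw [varOfEntropy]
    field_simp
    ring
  rw [hvalue] at hlim
  refine hlim.congr' ?_
  filter_upwards [Ioo_mem_nhdsLT one_half_pos] with q hq
  rw [hhat, binHInv_binH hα hα1 ⟨hq.1.le, hq.2.le⟩, smul_eq_mul, mul_inv (8 * α),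
    mul_assoc, div_eq_inv_mul, sub_eq_add_neg _ (log 2)]

theorem eventually_binH_mem_Icc (hα : 0 < α) (hα1 : α ≠ 1) :
    ∀ᶠ q in 𝓝[<] (1 / 2), binH α q ∈ Icc 0 (log 2) := by
  filter_upwards [Ioo_mem_nhdsLT one_half_pos] with q hq
  exact (bijOn_binH hα hα1).mapsTo ⟨hq.1.le, hq.2.le⟩

theorem convexOn_varOfEntropy (hα : 0 < α) (hα1 : α ≠ 1)
    (h : ∀ y ∈ Icc 0 (log 2), ConvexOn ℝ (Icc 0 (log 2)) fun x => hhat α x y) :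
    ConvexOn ℝ (Icc 0 (log 2)) (varOfEntropy α) := by
  refine convexOn_of_tendsto ?_ fun x _ => tendsto_hhat_varOfEntropy hα hα1 x
  filter_upwards [eventually_binH_mem_Icc hα hα1] with q hq
  exact (((h _ hq).add_const (-log 2)).smul (by positivity)).add_const (1 / 4)

theorem concaveOn_varOfEntropy (hα : 0 < α) (hα1 : α ≠ 1)
    (h : ∀ y ∈ Icc 0 (log 2), ConcaveOn ℝ (Icc 0 (log 2)) fun x => hhat α x y) :
    ConcaveOn ℝ (Icc 0 (log 2)) (varOfEntropy α) := by
  refine concaveOn_of_tendsto ?_ fun x _ => tendsto_hhat_varOfEntropy hα hα1 x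
  filter_upwards [eventually_binH_mem_Icc hα hα1] with q hq
  exact (((h _ hq).add_const (-log 2)).smul (by positivity)).add_const (1 / 4)

end Convolution

section Convexity

variable {α p : ℝ}

theorem mul_log_two_le_binH_of_convexOn (hα : 0 < α) (hα1 : α ≠ 1)
    (h : ConvexOn ℝ (Icc 0 (log 2)) (varOfEntropy α)) (hp : p ∈ Icc 0 (1 / 2)) :
    4 * log 2 * (p * (1 - p)) ≤ binH α p := by
  have hlog : 0 < log 2 := log_pos one_lt_two
  obtain ⟨hx0, hx1⟩ := (bijOn_binH hα hα1).mapsTo hp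
  have hchord := h.2 (left_mem_Icc.2 hlog.le) (right_mem_Icc.2 hlog.le)
    (sub_nonneg.2 ((div_le_one hlog).2 hx1)) (div_nonneg hx0 hlog.le) (sub_add_cancel _ _)
  simp only [smul_eq_mul, mul_zero, zero_add, div_mul_cancel₀ _ hlog.ne',
    varOfEntropy_binH hα hα1 hp, varOfEntropy_zero hα hα1, varOfEntropy_log_two hα hα1] at hchord
  calc 4 * log 2 * (p * (1 - p)) ≤ 4 * log 2 * (binH α p / log 2 * (1 / 4)) := by gcongr
    _ = binH α p := by field_simp

theorem le_two_mul_log_two_of_mul_log_two_le_binH (hα1 : α ≠ 1)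
    (h : ∀ p ∈ Icc 0 (1 / 2), 4 * log 2 * (p * (1 - p)) ≤ binH α p) : α ≤ 2 * log 2 := by
  have hlim := (tendsto_binH_sub_log_two_div_sq hα1).mono_left (nhdsLT_le_nhdsNE _)
  have hle : -4 * log 2 ≤ -2 * α := by
    refine ge_of_tendsto hlim ?_
    filter_upwards [Ioo_mem_nhdsLT one_half_pos] with p hp
    have hp' : 0 < (p - 1 / 2) ^ 2 := sq_pos_of_ne_zero (sub_ne_zero.2 hp.2.ne)
    rw [le_div_iff₀ hp']
    linarith [h p ⟨hp.1.le, hp.2.le⟩]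
  linarith

theorem not_forall_convexOn_hhat (hα : 2 * log 2 < α) :
    ¬ ∀ y ∈ Icc 0 (log 2), ConvexOn ℝ (Icc 0 (log 2)) fun x => hhat α x y := by
  intro h
  have hα1 : 1 < α := by linarith [log_two_gt_d9]
  have hα0 : 0 < α := by linarith
  exact hα.not_ge <| le_two_mul_log_two_of_mul_log_two_le_binH hα1.ne' fun p hp =>
    mul_log_two_le_binH_of_convexOn hα0 hα1.ne' (convexOn_varOfEntropy hα0 hα1.ne' h) hp

end Convexity

section Concavity

variable {α p : ℝ}

theorem div_mul_le_binH_of_concaveOn (hα : 1 < α)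
    (h : ConcaveOn ℝ (Icc 0 (log 2)) (varOfEntropy α)) (hp : p ∈ Ioc 0 (1 / 2)) :
    α / (α - 1) * (p * (1 - p)) ≤ binH α p := by
  have hα0 : 0 < α := by linarith
  have hmaps := (bijOn_binH hα0 hα.ne').mapsTo
  have hmono := strictMonoOn_binH hα0 hα.ne'
  have hpos {q : ℝ} (hq : q ∈ Ioc 0 (1 / 2)) : 0 < binH α q := by
    simpa [binH_zero hα0.ne'] using
      hmono (left_mem_Icc.2 (by norm_num)) (Ioc_subset_Icc_self hq) hq.1
  have hsecant : ∀ᶠ q in 𝓝[>] (0 : ℝ), binH α q / q * (p * (1 - p)) ≤ (1 - q) * binH α p := by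
    filter_upwards [Ioo_mem_nhdsGT hp.1] with q hq
    have hq' : q ∈ Ioc 0 (1 / 2) := ⟨hq.1, hq.2.le.trans hp.2⟩
    have hslope := h.neg.secant_mono (left_mem_Icc.2 (log_pos one_lt_two).le)
      (hmaps (Ioc_subset_Icc_self hq')) (hmaps (Ioc_subset_Icc_self hp))
      (hpos hq').ne' (hpos hp).ne'
      (hmono.monotoneOn (Ioc_subset_Icc_self hq') (Ioc_subset_Icc_self hp) hq.2.le)
    simp only [Pi.neg_apply, varOfEntropy_zero hα0 hα.ne', sub_zero, neg_zero, neg_div,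
      neg_le_neg_iff, varOfEntropy_binH hα0 hα.ne' (Ioc_subset_Icc_self hp),
      varOfEntropy_binH hα0 hα.ne' (Ioc_subset_Icc_self hq')] at hslope
    rw [div_le_div_iff₀ (hpos hp) (hpos hq')] at hslope
    rw [div_mul_eq_mul_div, div_le_iff₀ hq.1]
    linarith
  have hright : Tendsto (fun q : ℝ => (1 - q) * binH α p) (𝓝[>] 0) (𝓝 (binH α p)) := by
    have : Continuous fun q : ℝ => (1 - q) * binH α p := by fun_prop
    simpa using (this.tendsto 0).mono_left nhdsWithin_le_nhds
  exact le_of_tendsto_of_tendsto ((tendsto_binH_div_nhdsGT_zero hα).mul_const _) hright hsecant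

theorem kH_le_exp_of_div_mul_le_binH (hα : 1 < α) (hp : p ∈ Icc 0 1)
    (h : α / (α - 1) * (p * (1 - p)) ≤ binH α p) : kH α p ≤ exp (-(α * (p * (1 - p)))) := by
  have hα' : 0 < α - 1 := sub_pos.2 hα
  rw [← log_le_iff_le_exp (kH_pos α hp)]
  have hbinH : binH α p = -log (kH α p) / (α - 1) := by
    rw [binH, ← kH, ← neg_sub α 1, one_div, inv_neg, neg_mul, inv_mul_eq_div, neg_div]
  rw [hbinH, div_mul_eq_mul_div, div_le_div_iff_of_pos_right hα'] at h
  linarith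

theorem rpow_le_of_kH_le_exp (hα : 1 ≤ α) (hα2 : α ≤ 2) (hp : p ∈ Icc 0 (1 / 2))
    (h : kH α p ≤ exp (-(α * (p * (1 - p))))) : p ^ α ≤ 6 * p ^ 2 := by
  obtain ⟨hp0, hp1⟩ := hp
  set u := α * (p * (1 - p)) with hu
  have hu0 : 0 ≤ u := mul_nonneg (by linarith) (mul_nonneg hp0 (by linarith))
  have hu1 : u ≤ 1 := by nlinarith [mul_nonneg hp0 (show 0 ≤ 1 - p by linarith)]
  have hu2 : u ≤ 2 * p := by nlinarith [mul_nonneg hp0 (show 0 ≤ 1 - p by linarith)]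
  have hexp : exp (-u) ≤ 1 - u + u ^ 2 := by
    have := (abs_le.1 (abs_exp_sub_one_sub_id_le (x := -u) (by rwa [abs_neg, abs_of_nonneg hu0]))).2
    linarith [neg_sq u]
  have hlower := one_sub_mul_add_rpow_le_kH hα (show p ≤ 1 by linarith)
  calc p ^ α ≤ α * p - u + u ^ 2 := by linarith
    _ = α * p ^ 2 + u ^ 2 := by rw [hu]; ring
    _ ≤ 2 * p ^ 2 + (2 * p) ^ 2 := by gcongr
    _ = 6 * p ^ 2 := by ring

theorem exists_mul_rpow_lt_rpow {a b : ℝ} (hab : a < b) (C : ℝ) {ε : ℝ} (hε : 0 < ε) :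
    ∃ p ∈ Ioo 0 ε, C * p ^ b < p ^ a := by
  have hlarge := (tendsto_rpow_neg_nhdsGT_zero (sub_neg.2 hab)).eventually_gt_atTop C
  obtain ⟨p, hpC, hp⟩ := (hlarge.and (Ioo_mem_nhdsGT hε)).exists
  refine ⟨p, hp, ?_⟩
  calc C * p ^ b < p ^ (a - b) * p ^ b := by gcongr; exact rpow_pos_of_pos hp.1 b
    _ = p ^ a := by rw [← rpow_add hp.1, sub_add_cancel]

theorem not_forall_concaveOn_hhat (hα : 1 < α) (hα2 : α < 2) :
    ¬ ∀ y ∈ Icc 0 (log 2), ConcaveOn ℝ (Icc 0 (log 2)) fun x => hhat α x y := by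
  intro h
  have hconcave := concaveOn_varOfEntropy (by linarith) hα.ne' h
  obtain ⟨p, ⟨hp0, hp1⟩, hlt⟩ := exists_mul_rpow_lt_rpow hα2 6 (one_half_pos (α := ℝ))
  rw [rpow_two] at hlt
  have hbinH := div_mul_le_binH_of_concaveOn hα hconcave ⟨hp0, hp1.le⟩
  have hkH := kH_le_exp_of_div_mul_le_binH hα ⟨hp0.le, by linarith⟩ hbinH
  exact hlt.not_ge (rpow_le_of_kH_le_exp hα.le hα2.le ⟨hp0.le, hp1.le⟩ hkH)

end Concavity

theorem stmt_15_general {α : ℝ} (h1 : 2 * log 2 < α) (h2 : α < 2) :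
    ¬ (∀ y ∈ Icc 0 (log 2), ConvexOn ℝ (Icc 0 (log 2)) fun x => hhat α x y) ∧
    ¬ (∀ y ∈ Icc 0 (log 2), ConcaveOn ℝ (Icc 0 (log 2)) fun x => hhat α x y) :=
  ⟨not_forall_convexOn_hhat h1, not_forall_concaveOn_hhat (by linarith [log_two_gt_d9]) h2⟩

/-- For `α ∈ (1.387, 1.95)`, `ĥ_α` is neither convex nor concave
in its first argument uniformly over fixed second arguments. -/
theorem stmt_15 (α : ℝ) (h1 : (1.387 : ℝ) < α) (h2 : α < (1.95 : ℝ)) :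
    ¬ (∀ y ∈ Set.Icc (0 : ℝ) (Real.log 2),
        ConvexOn ℝ (Set.Icc (0 : ℝ) (Real.log 2)) (fun x => hhat α x y)) ∧
    ¬ (∀ y ∈ Set.Icc (0 : ℝ) (Real.log 2),
        ConcaveOn ℝ (Set.Icc (0 : ℝ) (Real.log 2)) (fun x => hhat α x y)) := by
  exact stmt_15_general (by linarith [log_two_lt_d9]) (by linarith)
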